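/- arXiv:2504.16095 — 2 statements merged into one kernel-verified Lean document; each statement's English description precedes it below -/
import Mathlib

section
/- Let E be a real inner product space and equip ℝ × E with the Minkowski pairing η((s,x),(t,y)) := -s*t + ⟪x,y⟫. Call (s,x) ∈ ℝ × E future-causal if s ≥ ‖x‖, and future-lightlike if s = ‖x‖ and s > 0. Let L ∈ ℝ × E be future-lightlike, let V ∈ ℝ × E be future-causal with V ≠ 0, and suppose there is s ∈ ℝ with η(L, V) • L = s • V. Then there exists c > 0 with V = c • L. -/
open scoped RealInnerProductSpace

/-!
If `η(L, V) ≠ 0`, the equation `η(L, V) • L = s • V` makes `L` a multiple of `V`, and the sign of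
the multiple is forced because both vectors point to the future. If `η(L, V) = 0`, write `L₀`, `V₀`
for the time components. Then `V₀ • L - L₀ • V` has no time component, so its Minkowski square is
nonnegative; expanding the square shows that it is also nonpositive, and hence the vector vanishes.
-/

/-- The Minkowski pairing on `ℝ × E` with signature `(-, +, …, +)`, the first factor being time.
It is encoded as a plain function rather than a bundled bilinear form. -/
def minkowskiPairing {E : Type*} [SeminormedAddCommGroup E] [InnerProductSpace ℝ E]
    (v w : ℝ × E) : ℝ :=
  -(v.1 * w.1) + ⟪v.2, w.2⟫

/-- A future-causal vector of `ℝ × E`, that is, a point of the closed future light cone. The zero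
vector is included. -/
def IsFutureCausal {E : Type*} [Norm E] (v : ℝ × E) : Prop :=
  ‖v.2‖ ≤ v.1

section Seminormed

variable {E : Type*} [SeminormedAddCommGroup E]

theorem IsFutureCausal.fst_nonneg {v : ℝ × E} (hv : IsFutureCausal v) : 0 ≤ v.1 :=
  (norm_nonneg v.2).trans hv

variable [InnerProductSpace ℝ E]

theorem IsFutureCausal.minkowskiPairing_self_nonpos {v : ℝ × E} (hv : IsFutureCausal v) :
    minkowskiPairing v v ≤ 0 := by
  have hsq : ‖v.2‖ * ‖v.2‖ ≤ v.1 * v.1 := mul_self_le_mul_self (norm_nonneg _) hv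
  rw [minkowskiPairing, real_inner_self_eq_norm_mul_norm]
  linarith

-- The left-hand side is the Minkowski square of `w.1 • v - v.1 • w`, whose time component is zero.
theorem norm_fst_smul_snd_sub_sq (v w : ℝ × E) :
    ‖w.1 • v.2 - v.1 • w.2‖ ^ 2 =
      w.1 ^ 2 * minkowskiPairing v v + v.1 ^ 2 * minkowskiPairing w w -
        2 * (v.1 * w.1) * minkowskiPairing v w := by
  simp only [minkowskiPairing, norm_sub_sq_real, norm_smul, mul_pow, Real.norm_eq_abs, sq_abs,
    real_inner_smul_left, real_inner_smul_right, real_inner_self_eq_norm_sq]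
  ring

end Seminormed

namespace IsFutureCausal

section Normed

variable {E : Type*} [NormedAddCommGroup E]

theorem eq_zero_of_fst_nonpos {v : ℝ × E} (hv : IsFutureCausal v) (h : v.1 ≤ 0) : v = 0 :=
  Prod.ext (h.antisymm hv.fst_nonneg) (norm_le_zero_iff.mp (hv.trans h))

theorem fst_pos {v : ℝ × E} (hv : IsFutureCausal v) (hv0 : v ≠ 0) : 0 < v.1 :=
  not_le.mp (mt hv.eq_zero_of_fst_nonpos hv0)

theorem sameRay_smul [Module ℝ E] {v : ℝ × E} {r : ℝ} (hv : IsFutureCausal v)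
    (hrv : IsFutureCausal (r • v)) : SameRay ℝ v (r • v) := by
  rcases le_or_gt 0 r with hr | hr
  · exact SameRay.sameRay_nonneg_smul_right v hr
  · have hrv0 : r • v = 0 :=
      hrv.eq_zero_of_fst_nonpos (mul_nonpos_of_nonpos_of_nonneg hr.le hv.fst_nonneg)
    exact hrv0 ▸ SameRay.zero_right v

end Normed

section InnerProductSpace

variable {E : Type*} [NormedAddCommGroup E] [InnerProductSpace ℝ E] {v w : ℝ × E}

theorem fst_smul_eq_fst_smul_of_minkowskiPairing_eq_zero (hv : IsFutureCausal v)
    (hw : IsFutureCausal w) (h : minkowskiPairing v w = 0) : w.1 • v = v.1 • w := by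
  have hsq : ‖w.1 • v.2 - v.1 • w.2‖ ^ 2 ≤ 0 := by
    rw [norm_fst_smul_snd_sub_sq, h, mul_zero, sub_zero]
    exact add_nonpos
      (mul_nonpos_of_nonneg_of_nonpos (sq_nonneg _) hv.minkowskiPairing_self_nonpos)
      (mul_nonpos_of_nonneg_of_nonpos (sq_nonneg _) hw.minkowskiPairing_self_nonpos)
  have hsnd : w.1 • v.2 = v.1 • w.2 :=
    sub_eq_zero.mp (norm_eq_zero.mp (sq_nonpos_iff _ |>.mp hsq))
  exact Prod.ext (mul_comm w.1 v.1) hsnd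

theorem sameRay_of_minkowskiPairing_eq_zero (hv : IsFutureCausal v) (hw : IsFutureCausal w)
    (h : minkowskiPairing v w = 0) : SameRay ℝ v w := by
  rcases eq_or_ne v 0 with rfl | hv0
  · exact SameRay.zero_left w
  rcases eq_or_ne w 0 with rfl | hw0
  · exact SameRay.zero_right v
  exact .inr <| .inr ⟨w.1, v.1, hw.fst_pos hw0, hv.fst_pos hv0,
    hv.fst_smul_eq_fst_smul_of_minkowskiPairing_eq_zero hw h⟩

theorem sameRay_of_minkowskiPairing_smul_eq_smul (hv : IsFutureCausal v) (hw : IsFutureCausal w)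
    {s : ℝ} (h : minkowskiPairing v w • v = s • w) : SameRay ℝ v w := by
  rcases eq_or_ne (minkowskiPairing v w) 0 with h0 | h0
  · exact hv.sameRay_of_minkowskiPairing_eq_zero hw h0
  · have hvw : v = ((minkowskiPairing v w)⁻¹ * s) • w := by
      rw [mul_smul, ← h, inv_smul_smul₀ h0]
    have hray := hw.sameRay_smul (hvw ▸ hv)
    rw [← hvw] at hray
    exact hray.symm

end InnerProductSpace

end IsFutureCausal

theorem stmt7_general {E : Type*} [NormedAddCommGroup E] [InnerProductSpace ℝ E] {L V : ℝ × E}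
    (hL : IsFutureCausal L) (hL0 : L ≠ 0) (hV : IsFutureCausal V) (hV0 : V ≠ 0)
    (h : ∃ s : ℝ, minkowskiPairing L V • L = s • V) : ∃ c : ℝ, 0 < c ∧ V = c • L := by
  obtain ⟨s, hs⟩ := h
  obtain ⟨c, hc, hcL⟩ :=
    (hL.sameRay_of_minkowskiPairing_smul_eq_smul hV hs).exists_pos_left hL0 hV0
  exact ⟨c, hc, hcL.symm⟩

/-- For the Minkowski pairing on `ℝ × E`: if `L` is future-lightlike, `V` is
future-causal and nonzero, and `η(L,V) • L = s • V` for some real `s`, then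
`V` is a positive multiple of `L`. -/
theorem stmt7 {E : Type*} [NormedAddCommGroup E] [InnerProductSpace ℝ E]
    (η : ℝ × E → ℝ × E → ℝ)
    (hη : ∀ v w : ℝ × E, η v w = -(v.1 * w.1) + ⟪v.2, w.2⟫)
    (L V : ℝ × E)
    (hL : L.1 = ‖L.2‖ ∧ 0 < L.1)      -- `L` is future-lightlike
    (hV : V.1 ≥ ‖V.2‖)                -- `V` is future-causal
    (hV0 : V ≠ 0)
    (h : ∃ s : ℝ, (η L V) • L = s • V) :
    ∃ c : ℝ, 0 < c ∧ V = c • L := by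
  obtain rfl : η = minkowskiPairing := funext₂ hη
  exact stmt7_general hL.1.ge (ne_of_apply_ne Prod.fst hL.2.ne') hV hV0 h
end

section
/- Let F be a real normed space, give ℝ × F the product norm, and let π : ℝ × F → ℝ × F be the continuous linear projection π(t,y) = (t,0). Let f₁, f₂ : ℝ × F → ℝ be differentiable at p = (0,0) with fderiv f₂ p (0,k) = 0 for all k ∈ F. For real numbers 0 ≤ s ≤ t ≤ 1 set f_A := (1-s)•f₁ + s•f₂, f_B := (1-t)•f₁ + t•f₂, and f₀ := f_B + f_A ∘ π - f_B ∘ π. Then ‖fderiv f₀ p‖ ≤ max (‖fderiv f₁ p‖) (‖fderiv f₂ p‖). -/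
/-!
Write `D₁`, `D₂` for the derivatives of `f₁`, `f₂` at `p`. As `D₂` vanishes on the kernel of `π`, it
satisfies `D₂ ∘ π = D₂`, and the derivative of `f₀` at `p` collapses to the convex combination
`(1 - t) • D₁ + (t - s) • (D₁ ∘ π) + s • D₂`. Since `π` is a contraction, each of the three terms
has norm at most `max ‖D₁‖ ‖D₂‖`. For this argument `π` may be replaced by any map fixing `p` whose
derivative at `p` is a contraction through which `D₂` factors.
-/

section FirstFactorProjection

variable {𝕜 E F G : Type*}

theorem norm_le_one_of_forall_apply_eq_fst_zero [NontriviallyNormedField 𝕜]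
    [SeminormedAddCommGroup E] [NormedSpace 𝕜 E] [SeminormedAddCommGroup F] [NormedSpace 𝕜 F]
    {π : E × F →L[𝕜] E × F} (hπ : ∀ q, π q = (q.1, 0)) : ‖π‖ ≤ 1 :=
  π.opNorm_le_bound zero_le_one fun q => by
    simpa only [hπ, Prod.norm_mk, norm_zero, one_mul, max_eq_left (norm_nonneg q.1)]
      using norm_fst_le q

theorem comp_eq_self_of_forall_apply_eq_fst_zero [Semiring 𝕜]
    [TopologicalSpace E] [AddCommMonoid E] [Module 𝕜 E]
    [TopologicalSpace F] [AddCommMonoid F] [Module 𝕜 F]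
    [TopologicalSpace G] [AddCommMonoid G] [Module 𝕜 G]
    {π : E × F →L[𝕜] E × F} (hπ : ∀ q, π q = (q.1, 0))
    {L : E × F →L[𝕜] G} (hL : ∀ y, L (0, y) = 0) : L ∘L π = L := by
  ext <;> simp [hπ, hL]

end FirstFactorProjection

theorem hasFDerivAt_add_comp_sub_comp {𝕜 E G : Type*} [NontriviallyNormedField 𝕜]
    [NormedAddCommGroup E] [NormedSpace 𝕜 E] [NormedAddCommGroup G] [NormedSpace 𝕜 G]
    {f g : E → G} {f' g' : E →L[𝕜] G} {r : E → E} {r' : E →L[𝕜] E} {p : E}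
    (hf : HasFDerivAt f f' p) (hg : HasFDerivAt g g' p)
    (hr : HasFDerivAt r r' p) (hrp : r p = p) :
    HasFDerivAt (g + f ∘ r - g ∘ r) (g' + (f' - g') ∘L r') p := by
  have hf_comp : HasFDerivAt (f ∘ r) (f' ∘L r') p := HasFDerivAt.comp p (by rwa [hrp]) hr
  have hg_comp : HasFDerivAt (g ∘ r) (g' ∘L r') p := HasFDerivAt.comp p (by rwa [hrp]) hr
  convert (hg.add hf_comp).sub hg_comp using 1
  rw [ContinuousLinearMap.sub_comp, add_sub_assoc]

theorem hasFDerivAt_interpolation_of_comp_eq {𝕜 E G : Type*} [NontriviallyNormedField 𝕜]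
    [NormedAddCommGroup E] [NormedSpace 𝕜 E] [NormedAddCommGroup G] [NormedSpace 𝕜 G]
    {f₁ f₂ : E → G} {f₁' f₂' : E →L[𝕜] G} {r : E → E} {r' : E →L[𝕜] E} {p : E}
    (hf₁ : HasFDerivAt f₁ f₁' p) (hf₂ : HasFDerivAt f₂ f₂' p)
    (hr : HasFDerivAt r r' p) (hrp : r p = p) (hf₂' : f₂' ∘L r' = f₂') (s t : 𝕜) :
    HasFDerivAt
      (((1 - t) • f₁ + t • f₂) + ((1 - s) • f₁ + s • f₂) ∘ r - ((1 - t) • f₁ + t • f₂) ∘ r)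
      ((1 - t) • f₁' + (t - s) • (f₁' ∘L r') + s • f₂') p := by
  have h_combo (c : 𝕜) :
      HasFDerivAt ((1 - c) • f₁ + c • f₂) ((1 - c) • f₁' + c • f₂') p :=
    (hf₁.const_smul (1 - c)).add (hf₂.const_smul c)
  convert hasFDerivAt_add_comp_sub_comp (h_combo s) (h_combo t) hr hrp using 1
  simp only [ContinuousLinearMap.sub_comp, ContinuousLinearMap.add_comp,
    ContinuousLinearMap.smul_comp, hf₂']
  module

theorem norm_smul_add_smul_add_smul_le {V : Type*} [SeminormedAddCommGroup V] [NormedSpace ℝ V]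
    {x y z : V} {a b c M : ℝ} (ha : 0 ≤ a) (hb : 0 ≤ b) (hc : 0 ≤ c) (habc : a + b + c = 1)
    (hx : ‖x‖ ≤ M) (hy : ‖y‖ ≤ M) (hz : ‖z‖ ≤ M) : ‖a • x + b • y + c • z‖ ≤ M :=
  calc
    ‖a • x + b • y + c • z‖ ≤ ‖a • x‖ + ‖b • y‖ + ‖c • z‖ := norm_add₃_le
    _ = a * ‖x‖ + b * ‖y‖ + c * ‖z‖ := by
      rw [norm_smul_of_nonneg ha, norm_smul_of_nonneg hb, norm_smul_of_nonneg hc]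
    _ ≤ a * M + b * M + c * M := by gcongr
    _ = M := by rw [← add_mul, ← add_mul, habc, one_mul]

theorem stmt9_general {E G : Type*} [NormedAddCommGroup E] [NormedSpace ℝ E]
    [NormedAddCommGroup G] [NormedSpace ℝ G]
    {f₁ f₂ : E → G} {r : E → E} {r' : E →L[ℝ] E} {p : E}
    (hf₁ : DifferentiableAt ℝ f₁ p) (hf₂ : DifferentiableAt ℝ f₂ p)
    (hr : HasFDerivAt r r' p) (hrp : r p = p) (hr' : ‖r'‖ ≤ 1)
    (hf₂' : fderiv ℝ f₂ p ∘L r' = fderiv ℝ f₂ p)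
    {s t : ℝ} (hs : 0 ≤ s) (hst : s ≤ t) (ht : t ≤ 1) :
    ‖fderiv ℝ
      (((1 - t) • f₁ + t • f₂) + ((1 - s) • f₁ + s • f₂) ∘ r - ((1 - t) • f₁ + t • f₂) ∘ r) p‖ ≤
      max ‖fderiv ℝ f₁ p‖ ‖fderiv ℝ f₂ p‖ := by
  have h_comp_le : ‖fderiv ℝ f₁ p ∘L r'‖ ≤ ‖fderiv ℝ f₁ p‖ :=
    (ContinuousLinearMap.opNorm_comp_le _ _).trans
      (mul_le_of_le_one_right (norm_nonneg _) hr')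
  rw [(hasFDerivAt_interpolation_of_comp_eq hf₁.hasFDerivAt hf₂.hasFDerivAt
    hr hrp hf₂' s t).fderiv]
  exact norm_smul_add_smul_add_smul_le (sub_nonneg.2 ht) (sub_nonneg.2 hst) hs (by ring)
    (le_max_left _ _) (h_comp_le.trans (le_max_left _ _)) (le_max_right _ _)

/-- Derivative estimate for the interpolating function built from convex
combinations `f_A = (1-s)•f₁ + s•f₂` and `f_B = (1-t)•f₁ + t•f₂` with
`0 ≤ s ≤ t ≤ 1`: the function `f₀ = f_B + f_A ∘ π - f_B ∘ π` satisfies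
`‖fderiv f₀ p‖ ≤ max ‖fderiv f₁ p‖ ‖fderiv f₂ p‖` at `p = (0,0)`, provided
`f₁, f₂` are differentiable at `p` and `fderiv f₂ p` vanishes on `{0} × F`. -/
theorem stmt9 {F : Type*} [NormedAddCommGroup F] [NormedSpace ℝ F]
    (π : (ℝ × F) →L[ℝ] ℝ × F) (hπ : ∀ q : ℝ × F, π q = (q.1, 0))
    (f₁ f₂ : ℝ × F → ℝ) (p : ℝ × F) (hp : p = (0, 0))
    (hf₁ : DifferentiableAt ℝ f₁ p) (hf₂ : DifferentiableAt ℝ f₂ p)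
    (hker : ∀ k : F, fderiv ℝ f₂ p (0, k) = 0)
    (s t : ℝ) (hs : 0 ≤ s) (hst : s ≤ t) (ht : t ≤ 1)
    (fA fB f₀ : ℝ × F → ℝ)
    (hfA : fA = (1 - s) • f₁ + s • f₂)
    (hfB : fB = (1 - t) • f₁ + t • f₂)
    (hf₀ : f₀ = fB + fA ∘ π - fB ∘ π) :
    ‖fderiv ℝ f₀ p‖ ≤ max ‖fderiv ℝ f₁ p‖ ‖fderiv ℝ f₂ p‖ := by
  subst hp hfA hfB hf₀
  exact stmt9_general hf₁ hf₂ π.hasFDerivAt (hπ _) (norm_le_one_of_forall_apply_eq_fst_zero hπ)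
    (comp_eq_self_of_forall_apply_eq_fst_zero hπ hker) hs hst ht
end
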